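/- Let L be a countable first-order language, let F be a Fraïssé class of L-structures and let U be its Fraïssé limit. Assume U is ω-saturated: for every finite tuple ā of elements of U and every set p of L-formulas in one free variable with parameters from ā, if every finite subset of p is realized by some element of U, then p is realized by some element of U. Then the class of countable L-structures with age contained in F has the amalgamation property: for all countable L-structures X, Y, Z whose ages are contained in F and all embeddings f : Z → X, g : Z → Y, there exist a countable L-structure W with age contained in F and embeddings f' : X → W, g' : Y → W with f' ∘ f = g' ∘ g. -/

import Mathlib

open FirstOrder Language Cardinal CategoryTheory

open FirstOrder.Language.Structure FirstOrder.Language.Substructure in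
/-- A structure generated by a tuple embeds wherever there is a tuple with the same atomic type. -/
theorem aux_embed {L : FirstOrder.Language.{0, 0}} {M N α : Type} [L.Structure M] [L.Structure N]
    (b : α → M) (a : α → N) (hb : closure L (Set.range b) = ⊤)
    (heq : ∀ t t' : L.Term α, t.realize b = t'.realize b ↔ t.realize a = t'.realize a)
    (hrel : ∀ (n : ℕ) (R : L.Relations n) (ts : Fin n → L.Term α),
      RelMap R (fun i => (ts i).realize b) ↔ RelMap R (fun i => (ts i).realize a)) :
    Nonempty (M ↪[L] N) := by
  have ht : ∀ x : M, ∃ t : L.Term α, t.realize b = x := by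
    intro x
    have hx : x ∈ closure L (Set.range b) := by rw [hb]; trivial
    obtain ⟨t, rfl⟩ := mem_closure_iff_exists_term.1 hx
    refine ⟨t.relabel (fun y => y.2.choose), ?_⟩
    rw [Term.realize_relabel]
    congr 1
    funext y
    exact y.2.choose_spec
  choose τ hτ using ht
  refine ⟨⟨⟨fun x => (τ x).realize a, ?_⟩, ?_, ?_⟩⟩
  · intro x y hxy
    have := (heq _ _).2 hxy
    rwa [hτ, hτ] at this
  · intro n F x
    have := (heq (τ (funMap F x)) (Term.func F fun i => τ (x i))).1 (by
      rw [hτ, Term.realize_func]; simp only [hτ])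
    rw [Term.realize_func] at this
    exact this
  · intro n R x
    have := hrel n R (fun i => τ (x i))
    simp only [hτ] at this
    exact this.symm

/-- Saturation: every tuple in an elementarily equivalent structure has its type realized. -/
theorem aux_sat {L : FirstOrder.Language.{0, 0}} {U W : Type} [L.Structure U] [L.Structure W]
    (h0 : ∀ φ : L.Formula (Fin 0), ∀ (v : Fin 0 → W) (w : Fin 0 → U), φ.Realize v ↔ φ.Realize w)
    (hsat : ∀ (n : ℕ) (a : Fin n → U) (p : Set (L.Formula (Fin n ⊕ Fin 1))),
      (∀ s : Finset (L.Formula (Fin n ⊕ Fin 1)), ↑s ⊆ p →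
        ∃ x : U, ∀ φ ∈ s, Formula.Realize φ (Sum.elim a fun _ => x)) →
      ∃ x : U, ∀ φ ∈ p, Formula.Realize φ (Sum.elim a fun _ => x)) :
    ∀ (n : ℕ) (b : Fin n → W), ∃ a : Fin n → U,
      ∀ φ : L.Formula (Fin n), φ.Realize b ↔ φ.Realize a := by
  intro n
  induction n with
  | zero => exact fun b => ⟨Fin.elim0, fun φ => h0 φ _ _⟩
  | succ n ih =>
    intro b
    obtain ⟨a, ha⟩ := ih (fun i => b i.castSucc)
    obtain ⟨x, hx⟩ := hsat n a
      {φ | φ.Realize (Sum.elim (fun i => b i.castSucc) fun _ => b (Fin.last n))} (by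
        intro s hs
        have := (ha (Formula.iExs (Fin 1) (Formula.iInf (fun φ : s => φ.1)))).1 (by
          rw [Formula.realize_iExs]
          refine ⟨fun _ => b (Fin.last n), ?_⟩
          rw [Formula.realize_iInf]
          exact fun φ => hs φ.2)
        rw [Formula.realize_iExs] at this
        obtain ⟨y, hy⟩ := this
        rw [Formula.realize_iInf] at hy
        refine ⟨y 0, fun φ hφ => ?_⟩
        have h := hy ⟨φ, hφ⟩
        have hy0 : y = fun _ => y 0 := by
          funext i
          rw [Subsingleton.elim i 0]
        rwa [hy0] at h)
    have key : ∀ φ : L.Formula (Fin (n + 1)), φ.Realize b →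
        φ.Realize (Fin.snoc a x : Fin (n + 1) → U) := by
      intro φ hφ
      let σ : Fin (n + 1) → Fin n ⊕ Fin 1 := Fin.snoc (α := fun _ => Fin n ⊕ Fin 1) Sum.inl (Sum.inr 0)
      have := hx (φ.relabel σ) (by
        change (φ.relabel σ).Realize _
        rw [Formula.realize_relabel]
        convert hφ using 1
        funext i
        refine Fin.lastCases ?_ (fun j => ?_) i <;> simp [σ])
      rw [Formula.realize_relabel] at this
      convert this using 1
      funext i
      refine Fin.lastCases ?_ (fun j => ?_) i <;> simp [σ]
    refine ⟨Fin.snoc a x, fun φ => ⟨key φ, fun h => ?_⟩⟩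
    by_contra hc
    have := key φ.not (by rwa [Formula.realize_not])
    rw [Formula.realize_not] at this
    exact this h

open FirstOrder.Language.Structure in
/-- A family of locally-embedding maps gives an embedding into the ultrapower. -/
theorem aux_ultra {L : FirstOrder.Language.{0, 0}} {X U I : Type} [L.Structure X] [L.Structure U]
    (u : Ultrafilter I) (h : I → X → U)
    (hh : ∀ t : Set X, t.Finite → ∀ᶠ i in (u : Filter I), ∃ (S : L.Substructure X) (e : S ↪[L] U),
      t ⊆ S ∧ ∀ x : S, h i x = e x) :
    ∃ e : X ↪[L] (u : Filter I).Product (fun _ => U),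
      ∀ x, e x = ((fun i => h i x : I → U) : (u : Filter I).Product (fun _ => U)) := by
  refine ⟨⟨⟨fun x => ((fun i => h i x : I → U) : (u : Filter I).Product (fun _ => U)), ?_⟩,
    ?_, ?_⟩, fun x => rfl⟩
  · intro x y hxy
    have hxy' : ∀ᶠ i in (u : Filter I), h i x = h i y := Quotient.exact hxy
    obtain ⟨i, h1, S, e, hS, he⟩ := (hxy'.and (hh {x, y} (by simp))).exists
    have hx : x ∈ S := hS (by simp)
    have hy : y ∈ S := hS (by simp)
    have h2 := he ⟨x, hx⟩
    have h3 := he ⟨y, hy⟩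
    simp only at h2 h3
    rw [h2, h3] at h1
    simpa using e.injective h1
  · intro n F x
    refine Eq.trans ?_ (Ultraproduct.funMap_cast (u := u) (M := fun _ => U) F
      (fun j i => h i (x j))).symm
    refine Quotient.sound ?_
    change ∀ᶠ i in (u : Filter I), h i (funMap F x) = funMap F (fun j => h i (x j))
    filter_upwards [hh (insert (funMap F x) (Set.range x)) ((Set.finite_range x).insert _)]
    rintro i ⟨S, e, hS, he⟩
    have hx : ∀ j, x j ∈ S := fun j => hS (by simp)
    have h2 := e.map_fun F (fun j => ⟨x j, hx j⟩)
    rw [← he] at h2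
    refine h2.trans ?_
    congr 1
    funext j
    exact (he _).symm
  · intro n R x
    have h1 : RelMap R (fun j => ((fun i => h i (x j) : I → U) : (u : Filter I).Product (fun _ => U)))
        ↔ ∀ᶠ i in (u : Filter I), RelMap R (fun j => h i (x j)) :=
      relMap_quotient_mk' (s := (u : Filter I).productSetoid (fun _ => U))
        (ps := Ultraproduct.setoidPrestructure (fun _ => U) u) R (fun j i => h i (x j))
    refine Iff.trans h1 ?_
    have h2 : ∀ᶠ i in (u : Filter I), (RelMap R (fun j => h i (x j)) ↔ RelMap R x) := by
      filter_upwards [hh (Set.range x) (Set.finite_range x)]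
      rintro i ⟨S, e, hS, he⟩
      have hx : ∀ j, x j ∈ S := fun j => hS (by simp)
      have h2 := e.map_rel R (fun j => ⟨x j, hx j⟩)
      have h3 : (e ∘ fun j => (⟨x j, hx j⟩ : S)) = fun j => h i (x j) := by
        funext j
        exact (he _).symm
      rw [h3] at h2
      exact h2
    rw [Filter.eventually_congr h2, Filter.eventually_const]

open FirstOrder.Language.Structure FirstOrder.Language.Substructure in
theorem aux_local {L : FirstOrder.Language.{0, 0}} {U X Y Z : Type} [Nonempty U]
    [L.Structure U] [L.Structure X] [L.Structure Y] [L.Structure Z]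
    (hom : L.IsUltrahomogeneous U)
    (hX : L.age X ⊆ L.age U) (hY : L.age Y ⊆ L.age U)
    (f : Z ↪[L] X) (g : Z ↪[L] Y) (s : Set Z) (t : Set X) (r : Set Y)
    (hs : s.Finite) (ht : t.Finite) (hr : r.Finite) :
    ∃ (h : X → U) (k : Y → U),
      (∃ (S : L.Substructure X) (e : S ↪[L] U), t ⊆ S ∧ ∀ x : S, h x = e x) ∧
      (∃ (S : L.Substructure Y) (e : S ↪[L] U), r ⊆ S ∧ ∀ x : S, k x = e x) ∧
      ∀ z ∈ s, h (f z) = k (g z) := by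
  classical
  let A := closure L s
  let B := closure L (f '' s ∪ t)
  let C := closure L (g '' s ∪ r)
  have hAB : ∀ z : A, f z ∈ B := by
    intro z
    have : A.map f.toHom ≤ B := by
      rw [← closure_image]
      exact closure_mono (Set.subset_union_left)
    exact this ⟨z, z.2, rfl⟩
  have hAC : ∀ z : A, g z ∈ C := by
    intro z
    have : A.map g.toHom ≤ C := by
      rw [← closure_image]
      exact closure_mono (Set.subset_union_left)
    exact this ⟨z, z.2, rfl⟩
  have hB : Nonempty (B ↪[L] U) :=
    (hX (age.fg_substructure (S := B) (fg_closure ((hs.image f).union ht)))).2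
  obtain ⟨e⟩ : Nonempty (C ↪[L] U) :=
    (hY (age.fg_substructure (S := C) (fg_closure ((hs.image g).union hr)))).2
  have hA : FG L A := (fg_iff_structure_fg _).1 (fg_closure hs)
  obtain ⟨e', he'⟩ := hom.extend_embedding hA
    (e.comp ((g.comp A.subtype).codRestrict C hAC)) ((f.comp A.subtype).codRestrict B hAB)
  refine ⟨fun x => if hx : x ∈ B then e' ⟨x, hx⟩ else Classical.arbitrary U,
    fun x => if hx : x ∈ C then e ⟨x, hx⟩ else Classical.arbitrary U,
    ⟨B, e', Set.subset_union_right.trans subset_closure, fun x => by simp⟩,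
    ⟨C, e, Set.subset_union_right.trans subset_closure, fun x => by simp⟩, ?_⟩
  intro z hz
  have hzA : z ∈ A := subset_closure hz
  have := DFunLike.congr_fun he' (⟨z, hzA⟩ : A)
  have hfz : f z ∈ B := hAB ⟨z, hzA⟩
  have hgz : g z ∈ C := hAC ⟨z, hzA⟩
  simp only [dif_pos hfz, dif_pos hgz]
  exact this.symm

/-- Let `K` be a Fraïssé class in a countable language with Fraïssé limit
`U`. If `U` is `ω`-saturated (every finitely realized set of formulas in one free variable
with finitely many parameters from `U` is realized in `U`), then the class of countable
structures with age contained in `K` has the amalgamation property. -/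
theorem statement14 (L : FirstOrder.Language.{0, 0}) [Countable L.Symbols]
    (K : Set (Bundled.{0} L.Structure)) [IsFraisse K]
    (U : Type) [L.Structure U] [Countable U]
    (hU : IsFraisseLimit K U)
    (hsat : ∀ (n : ℕ) (a : Fin n → U) (p : Set (L.Formula (Fin n ⊕ Fin 1))),
      (∀ s : Finset (L.Formula (Fin n ⊕ Fin 1)), ↑s ⊆ p →
        ∃ x : U, ∀ φ ∈ s, Formula.Realize φ (Sum.elim a fun _ => x)) →
      ∃ x : U, ∀ φ ∈ p, Formula.Realize φ (Sum.elim a fun _ => x)) :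
    ∀ (Z X Y : Bundled.{0} L.Structure),
      Countable Z → Countable X → Countable Y →
      L.age Z ⊆ K → L.age X ⊆ K → L.age Y ⊆ K →
      ∀ (f : Z ↪[L] X) (g : Z ↪[L] Y),
        ∃ W : Bundled.{0} L.Structure, Countable W ∧ L.age W ⊆ K ∧
          ∃ (f' : X ↪[L] W) (g' : Y ↪[L] W), f'.comp f = g'.comp g := by
  intro Z X Y _ hXc hYc _ hX hY f g
  have hage := hU.age
  by_cases hne : Nonempty U
  swap
  · have hYe : IsEmpty Y := by
      by_contra hc
      rw [not_isEmpty_iff] at hc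
      obtain ⟨y⟩ := hc
      have h1 := hY (age.fg_substructure (Substructure.fg_closure_singleton (L := L) y))
      rw [← hage] at h1
      obtain ⟨e⟩ := h1.2
      exact hne ⟨e ⟨y, Substructure.subset_closure rfl⟩⟩
    have hXe : IsEmpty X := by
      by_contra hc
      rw [not_isEmpty_iff] at hc
      obtain ⟨y⟩ := hc
      have h1 := hX (age.fg_substructure (Substructure.fg_closure_singleton (L := L) y))
      rw [← hage] at h1
      obtain ⟨e⟩ := h1.2
      exact hne ⟨e ⟨y, Substructure.subset_closure rfl⟩⟩
    have h1 : L.age Y ⊆ L.age U := hage ▸ hY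
    have hbot : Nonempty ((⊤ : L.Substructure X) ↪[L] U) := by
      have h2 : (⊤ : L.Substructure X).FG := by
        refine Substructure.fg_def.2 ⟨Set.univ, Set.toFinite _, Substructure.closure_univ⟩
      have h3 := hX (age.fg_substructure h2)
      rw [← hage] at h3
      exact h3.2
    have hbot' : Nonempty ((⊤ : L.Substructure Y) ↪[L] U) := by
      have h2 : (⊤ : L.Substructure Y).FG := by
        refine Substructure.fg_def.2 ⟨Set.univ, Set.toFinite _, Substructure.closure_univ⟩
      have h3 := hY (age.fg_substructure h2)
      rw [← hage] at h3
      exact h3.2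
    obtain ⟨e⟩ := hbot
    obtain ⟨e'⟩ := hbot'
    refine ⟨Bundled.of U, inferInstanceAs (Countable U), hage.le,
      e.comp Substructure.topEquiv.symm.toEmbedding,
      e'.comp Substructure.topEquiv.symm.toEmbedding, ?_⟩
    ext z
    exact hXe.elim (f z)
  let I := Finset Z × Finset X × Finset Y
  have hloc := fun i : I => aux_local hU.ultrahomogeneous (hX.trans hage.ge) (hY.trans hage.ge) f g
    (i.1 : Set Z) (i.2.1 : Set X) (i.2.2 : Set Y) i.1.finite_toSet i.2.1.finite_toSet
    i.2.2.finite_toSet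
  choose h k hh hk hhk using hloc
  classical
  let u : Ultrafilter I := Ultrafilter.of Filter.atTop
  have hu : (u : Filter I) ≤ Filter.atTop := Ultrafilter.of_le _
  obtain ⟨e, he⟩ := aux_ultra u h (by
    intro t ht
    filter_upwards [hu (Filter.mem_atTop (⟨∅, ht.toFinset, ∅⟩ : I))] with i hi
    obtain ⟨S, e, h1, h2⟩ := hh i
    refine ⟨S, e, fun x hx => h1 (hi.2.1 (by simpa using hx)), h2⟩)
  obtain ⟨e', he'⟩ := aux_ultra u k (by
    intro t ht
    filter_upwards [hu (Filter.mem_atTop (⟨∅, ∅, ht.toFinset⟩ : I))] with i hi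
    obtain ⟨S, e, h1, h2⟩ := hk i
    refine ⟨S, e, fun x hx => h1 (hi.2.2 (by simpa using hx)), h2⟩)
  have hcomm : ∀ z, e (f z) = e' (g z) := by
    intro z
    rw [he, he']
    refine Quotient.sound ?_
    change ∀ᶠ i in (u : Filter I), h i (f z) = k i (g z)
    filter_upwards [hu (Filter.mem_atTop (⟨{z}, ∅, ∅⟩ : I))] with i hi
    exact hhk i z (hi.1 (by simp))
  have hsat' := aux_sat (U := U) (W := (u : Filter I).Product (fun _ => U)) (by
    intro φ v w
    have h1 := Ultraproduct.realize_formula_cast (u := u) (M := fun _ => U) φ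
      (fun j : Fin 0 => j.elim0)
    rw [show v = fun j => j.elim0 from Subsingleton.elim _ _]
    rw [show (fun j : Fin 0 => (j.elim0 : (u : Filter I).Product (fun _ => U))) = _ from
      Subsingleton.elim _ _]
    refine h1.trans ?_
    have h2 : ∀ a : I, (fun i : Fin 0 => (i.elim0 : I → U) a) = w := fun a => Subsingleton.elim _ _
    simp only [h2, Filter.eventually_const]) hsat
  have hageW : L.age ((u : Filter I).Product (fun _ => U)) ⊆ K := by
    rintro N ⟨hN, ⟨j⟩⟩
    rw [← hage]
    refine ⟨hN, ?_⟩
    obtain ⟨n, b, hb⟩ := Substructure.fg_iff_exists_fin_generating_family.1 (Structure.fg_def.1 hN)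
    obtain ⟨a, ha⟩ := hsat' n (j ∘ b)
    refine aux_embed b a hb ?_ ?_
    · intro t t'
      have := ha (Term.equal t t')
      rw [Formula.realize_equal, Formula.realize_equal, HomClass.realize_term,
        HomClass.realize_term, j.injective.eq_iff] at this
      exact this
    · intro n R ts
      have := ha (R.formula ts)
      rw [Formula.realize_rel, Formula.realize_rel] at this
      rw [← this, ← j.map_rel]
      simp only [HomClass.realize_term]
      rfl
  let S := e.toHom.range ⊔ e'.toHom.range
  have hSc : Countable S := by
    rw [← Substructure.cg_iff_countable]
    exact (Structure.CG.range Structure.cg_of_countable _).sup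
      (Structure.CG.range Structure.cg_of_countable _)
  refine ⟨Bundled.of S, hSc, (Embedding.age_subset_age S.subtype).trans hageW,
    e.codRestrict S fun x => (le_sup_left : _ ≤ S) ⟨x, rfl⟩,
    e'.codRestrict S fun x => (le_sup_right : _ ≤ S) ⟨x, rfl⟩, ?_⟩
  ext z
  exact Subtype.ext (hcomm z)
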